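/- The real number e = exp 1 is not an algebraic integer; in particular, e is not a root of the characteristic polynomial of any square matrix with integer entries. -/

import Mathlib

open Polynomial in
theorem exp_one_aux (q : ℤ[X]) (h0 : q.coeff 0 ≠ 0) :
    aeval (Real.exp 1) q ≠ 0 := by
  intro hq
  have hqC : aeval (Complex.exp 1) q = 0 := by
    have h := aeval_algebraMap_apply ℂ (Real.exp 1) q
    rw [hq, map_zero] at h
    simpa using h
  set d := q.natDegree with hd
  let f : ℤ[X] := ∏ i ∈ Finset.range d, (X - C ((i : ℤ) + 1))
  have hf : f.eval 0 ≠ 0 := by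
    simp only [f, eval_prod, Finset.prod_ne_zero_iff]
    intro i _
    simp only [eval_sub, eval_X, eval_C]
    omega
  have hf0 : f ≠ 0 := by rintro h; simp [h] at hf
  have hr : ∀ i ∈ Finset.range d, ((((i : ℤ) + 1 : ℤ)) : ℂ) ∈ f.aroots ℂ := by
    intro i hi
    rw [mem_aroots]
    refine ⟨hf0, ?_⟩
    simp only [f, map_prod]
    apply Finset.prod_eq_zero hi
    simp
  obtain ⟨c, hc⟩ := LindemannWeierstrass.exp_polynomial_approx f hf
  set S : ℝ := ∑ i ∈ Finset.range d, |(q.coeff (i + 1) : ℝ)| with hS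
  have hlim : Filter.Tendsto (fun n : ℕ => S * c * (c ^ n / (n.factorial : ℝ))) Filter.atTop (nhds 0) := by
    simpa using (FloorSemiring.tendsto_pow_div_factorial_atTop c).const_mul (S * c)
  have hev := hlim.eventually (gt_mem_nhds (zero_lt_one))
  obtain ⟨N, hN⟩ := Filter.eventually_atTop.1 hev
  obtain ⟨p, hpN, hp⟩ := Nat.exists_infinite_primes
    (N + 1 + ((eval 0 f).natAbs + 1) + ((q.coeff 0).natAbs + 1))
  obtain ⟨n, hn, g, -, hg⟩ := hc p (by omega) hp
  have hsmall := hN (p - 1) (by omega)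
  have hpow : S * c * (c ^ (p - 1) / ((p - 1).factorial : ℝ))
      = S * (c ^ p / ((p - 1).factorial : ℝ)) := by
    obtain ⟨m, rfl⟩ : ∃ m, p = m + 1 := ⟨p - 1, by omega⟩
    simp only [Nat.add_sub_cancel, pow_succ]
    ring
  rw [hpow] at hsmall
  set M : ℤ := n * q.coeff 0
    + p * ∑ i ∈ Finset.range d, q.coeff (i + 1) * g.eval ((i : ℤ) + 1) with hM
  have hsum : (q.coeff 0 : ℂ)
      + ∑ i ∈ Finset.range d, (q.coeff (i + 1) : ℂ) * Complex.exp (((i : ℤ) + 1 : ℤ) : ℂ) = 0 := by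
    rw [aeval_eq_sum_range, Finset.sum_range_succ'] at hqC
    rw [← hqC, add_comm]
    simp [zsmul_eq_mul, ← Complex.exp_nat_mul, hd]
  have hMC : (M : ℂ) = - ∑ i ∈ Finset.range d, (q.coeff (i + 1) : ℂ) *
      (n • Complex.exp (((i : ℤ) + 1 : ℤ) : ℂ) - p • aeval ((((i : ℤ) + 1 : ℤ)) : ℂ) g) := by
    have hgi : ∀ i : ℕ, aeval ((((i : ℤ) + 1 : ℤ)) : ℂ) g = ((g.eval ((i : ℤ) + 1) : ℤ) : ℂ) := by
      intro i
      have := aeval_algebraMap_apply_eq_algebraMap_eval (A := ℂ) ((i : ℤ) + 1) g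
      simpa using this
    simp only [hgi, hM, zsmul_eq_mul, nsmul_eq_mul, mul_sub, Finset.sum_sub_distrib]
    have e1 : ∑ i ∈ Finset.range d, (q.coeff (i + 1) : ℂ) *
        ((n : ℂ) * Complex.exp (((i : ℤ) + 1 : ℤ) : ℂ)) = - (n * q.coeff 0) := by
      have : ∑ i ∈ Finset.range d, (q.coeff (i + 1) : ℂ) *
        ((n : ℂ) * Complex.exp (((i : ℤ) + 1 : ℤ) : ℂ)) = n * ∑ i ∈ Finset.range d,
          (q.coeff (i + 1) : ℂ) * Complex.exp (((i : ℤ) + 1 : ℤ) : ℂ) := by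
        rw [Finset.mul_sum]; exact Finset.sum_congr rfl fun _ _ => by ring
      rw [this]
      linear_combination (n : ℂ) * hsum
    rw [e1]
    push_cast
    rw [Finset.mul_sum, neg_sub, sub_neg_eq_add, add_comm]
    congr 1
    exact Finset.sum_congr rfl fun _ _ => by ring
  have hMlt : ‖(M : ℂ)‖ < 1 := by
    refine lt_of_le_of_lt ?_ hsmall
    rw [hMC, norm_neg, hS, Finset.sum_mul]
    refine (norm_sum_le _ _).trans (Finset.sum_le_sum fun i hi => ?_)
    rw [norm_mul, Complex.norm_intCast]
    exact mul_le_mul_of_nonneg_left (hg (hr i hi)) (abs_nonneg _)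
  have hM0 : M = 0 := by
    rw [Complex.norm_intCast] at hMlt
    have : |M| < 1 := by exact_mod_cast hMlt
    exact Int.abs_lt_one_iff.1 this
  have hdvd : (p : ℤ) ∣ n * q.coeff 0 := by
    rw [hM0] at hM
    exact (dvd_add_left (dvd_mul_right _ _)).1 (hM ▸ dvd_zero _)
  rcases (Nat.prime_iff_prime_int.1 hp).dvd_or_dvd hdvd with h | h
  · exact hn h
  · have := Nat.le_of_dvd (Int.natAbs_pos.2 h0) (Int.natCast_dvd.1 h)
    omega

/-- The real number `e = exp 1` is not an algebraic integer; in particular, `e` is not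
a root of the characteristic polynomial of any square matrix with integer entries. -/
theorem exp_one_not_algebraic_integer :
    ¬ IsIntegral ℤ (Real.exp 1) ∧
      ∀ (n : ℕ) (A : Matrix (Fin n) (Fin n) ℤ),
        Polynomial.aeval (Real.exp 1) A.charpoly ≠ 0 := by
  have h1 : ¬ IsIntegral ℤ (Real.exp 1) := fun h => by
    obtain ⟨q, hq0, hq⟩ := h.isAlgebraic.exists_nonzero_coeff_and_aeval_eq_zero
      (mem_nonZeroDivisors_of_ne_zero (Real.exp_ne_zero 1))
    exact exp_one_aux q hq0 hq
  exact ⟨h1, fun n A h => h1 ⟨A.charpoly, A.charpoly_monic, h⟩⟩
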